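/- Let S : [0,T] → L(V,V′) be Lipschitz continuous with constant L in operator norm. Then there exists a bounded strongly measurable function Ṡ : [0,T] → L(V,V′) with ‖Ṡ(t)‖ ≤ L for all t, such that for every u ∈ V, the V′-valued function t ↦ S(t)u is differentiable a.e. with derivative Ṡ(t)u. -/

import Mathlib

open MeasureTheory Set Function Filter Topology
open scoped NNReal

/-- An orthonormal family in a separable inner product space is countable. -/
theorem Orthonormal.countable_of_separableSpace {ι H : Type*} [NormedAddCommGroup H]
    [InnerProductSpace ℝ H] [TopologicalSpace.SeparableSpace H] {b : ι → H}
    (hb : Orthonormal ℝ b) : Countable ι := by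
  have hdist : ∀ i j, i ≠ j → (1 : ℝ) ≤ dist (b i) (b j) := by
    intro i j hij
    have h := norm_sub_sq_real (b i) (b j)
    rw [hb.1 i, hb.1 j, hb.2 hij] at h
    rw [dist_eq_norm]
    nlinarith [norm_nonneg (b i - b j)]
  have : (univ : Set ι).PairwiseDisjoint fun i => Metric.ball (b i) (1 / 2) :=
    fun i _ j _ hij => Metric.ball_disjoint_ball (by linarith [hdist i j hij])
  exact countable_univ_iff.1 (this.countable_of_isOpen (fun i _ => Metric.isOpen_ball)
    fun i _ => ⟨b i, by simp⟩)

/-- If a Lipschitz function has differentiable coordinates at a point, its coordinate derivatives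
are the coordinates of a vector bounded by the Lipschitz constant. -/
theorem HilbertBasis.exists_weak_deriv {ι H : Type*} [NormedAddCommGroup H]
    [InnerProductSpace ℝ H] (b : HilbertBasis ι ℝ H) {C : ℝ≥0} {f : ℝ → H}
    (hf : LipschitzWith C f) {t : ℝ}
    (ht : ∀ k, DifferentiableAt ℝ (fun s => inner ℝ (b k) (f s)) t) :
    ∃ y : H, ‖y‖ ≤ C ∧ ∀ k, inner ℝ (b k) y = deriv (fun s => inner ℝ (b k) (f s)) t := by
  set c : ι → ℝ := fun k => deriv (fun s => inner ℝ (b k) (f s)) t with hc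
  have hbound : ∀ s : Finset ι, ‖∑ k ∈ s, c k • b k‖ ≤ C := by
    intro s
    set d := ∑ k ∈ s, c k • b k with hd
    have hder : HasDerivAt (fun x => inner ℝ d (f x)) (‖d‖ ^ 2) t := by
      have h1 : HasDerivAt (fun x => ∑ k ∈ s, c k * inner ℝ (b k) (f x)) (∑ k ∈ s, c k * c k) t :=
        HasDerivAt.fun_sum fun k _ => (ht k).hasDerivAt.const_mul (c k)
      have h2 : ‖d‖ ^ 2 = ∑ k ∈ s, c k * c k := by
        rw [← real_inner_self_eq_norm_sq, hd, b.orthonormal.inner_sum]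
        simp
      rw [h2]
      convert h1 using 2 with x
      simp [hd, sum_inner, inner_smul_left]
    have hlip : LipschitzWith (‖d‖₊ * C) fun x => inner ℝ d (f x) :=
      LipschitzWith.of_dist_le_mul fun x y => by
        rw [Real.dist_eq, ← inner_sub_right]
        refine (abs_real_inner_le_norm _ _).trans ?_
        rw [← dist_eq_norm]
        simpa [mul_assoc] using mul_le_mul_of_nonneg_left (hf.dist_le_mul x y) (norm_nonneg d)
    have h3 := norm_deriv_le_of_lipschitz (x₀ := t) hlip
    rw [hder.deriv, Real.norm_of_nonneg (sq_nonneg _)] at h3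
    push_cast at h3
    by_contra! h
    nlinarith [C.coe_nonneg]
  have hmem : Memℓp c 2 := memℓp_gen' (C := (C : ℝ) ^ 2) fun s => by
    have h2 : ‖∑ k ∈ s, c k • b k‖ ^ 2 = ∑ k ∈ s, c k * c k := by
      rw [← real_inner_self_eq_norm_sq, b.orthonormal.inner_sum]
      simp
    have := pow_le_pow_left₀ (norm_nonneg _) (hbound s) 2
    rw [h2] at this
    simpa [← sq] using this
  refine ⟨b.repr.symm ⟨c, hmem⟩, ?_, fun k => ?_⟩
  · exact le_of_tendsto (b.hasSum_repr_symm ⟨c, hmem⟩).norm (Eventually.of_forall hbound)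
  · rw [← b.repr_apply_apply]; simp [hc]

/-- A Lipschitz function from `ℝ` to a separable Hilbert space is differentiable almost
everywhere. -/
theorem LipschitzWith.ae_differentiableAt_of_separableSpace {H : Type*} [NormedAddCommGroup H]
    [InnerProductSpace ℝ H] [CompleteSpace H] [TopologicalSpace.SeparableSpace H]
    {C : ℝ≥0} {f : ℝ → H} (hf : LipschitzWith C f) : ∀ᵐ t, DifferentiableAt ℝ f t := by
  obtain ⟨w, b, -⟩ := exists_hilbertBasis ℝ H
  have : Countable w := b.orthonormal.countable_of_separableSpace
  have hlip : ∀ k, LipschitzWith C fun s => inner ℝ (b k) (f s) := fun k =>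
    LipschitzWith.of_dist_le_mul fun x y => by
      rw [Real.dist_eq, ← inner_sub_right]
      refine (abs_real_inner_le_norm _ _).trans ?_
      rw [b.orthonormal.1 k, one_mul, ← dist_eq_norm]
      exact hf.dist_le_mul x y
  have hex : ∀ t, ∃ y : H, ‖y‖ ≤ C ∧
      ((∀ k, DifferentiableAt ℝ (fun s => inner ℝ (b k) (f s)) t) →
        ∀ k, inner ℝ (b k) y = deriv (fun s => inner ℝ (b k) (f s)) t) := by
    intro t
    by_cases h : ∀ k, DifferentiableAt ℝ (fun s => inner ℝ (b k) (f s)) t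
    · obtain ⟨y, hy, hy'⟩ := b.exists_weak_deriv hf h
      exact ⟨y, hy, fun _ => hy'⟩
    · exact ⟨0, by simp, fun h' => absurd h' h⟩
  choose g hgC hg using hex
  have hcoord : ∀ᵐ t, ∀ k, inner ℝ (b k) (g t) = deriv (fun s => inner ℝ (b k) (f s)) t := by
    filter_upwards [ae_all_iff.2 fun k => (hlip k).ae_differentiableAt_real] with t ht
    exact hg t ht
  have hmeas : AEStronglyMeasurable g volume := by
    refine aestronglyMeasurable_of_tendsto_ae (u := (atTop : Filter (Finset w)))
      (f := fun s t => ∑ k ∈ s, deriv (fun s => inner ℝ (b k) (f s)) t • b k)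
      (fun s => ?_) ?_
    · exact Finset.aestronglyMeasurable_fun_sum s fun k _ =>
        (aestronglyMeasurable_deriv _ _).smul_const (b k)
    · filter_upwards [hcoord] with t ht
      have := b.hasSum_repr (g t)
      simp only [b.repr_apply_apply, ht] at this
      exact this
  have hloc : LocallyIntegrable g volume :=
    (locallyIntegrable_const (C : ℝ)).mono hmeas
      (Eventually.of_forall fun t => by simpa using hgC t)
  have hint : ∀ t, f t = f 0 + ∫ s in (0 : ℝ)..t, g s := by
    intro t
    have hgi : IntervalIntegrable g volume 0 t :=
      intervalIntegrable_iff.2 <|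
        (hloc.integrableOn_isCompact isCompact_uIcc).mono_set uIoc_subset_uIcc
    refine b.repr.injective (lp.ext (funext fun k => ?_))
    rw [b.repr_apply_apply, b.repr_apply_apply, inner_add_right]
    have h1 := ((hlip k).lipschitzOnWith
      (s := uIcc 0 t)).absolutelyContinuousOnInterval.integral_deriv_eq_sub
    have h2 := ContinuousLinearMap.intervalIntegral_comp_comm (innerSL ℝ (b k)) hgi
    simp only [innerSL_apply_apply] at h2
    rw [← h2, intervalIntegral.integral_congr_ae (hcoord.mono fun s hs _ => hs k), h1]
    ring
  filter_upwards [_root_.LocallyIntegrable.ae_hasDerivAt_integral hloc] with t ht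
  have := (ht 0).const_add (f 0)
  rw [← funext hint] at this
  exact this.differentiableAt

/-- A Lipschitz function from a compact interval to a Hilbert space is differentiable almost
everywhere in the interior. -/
theorem LipschitzOnWith.ae_differentiableAt_of_innerProductSpace {H : Type*}
    [NormedAddCommGroup H] [InnerProductSpace ℝ H] [CompleteSpace H] {C : ℝ≥0} {f : ℝ → H}
    {a b : ℝ} (hab : a ≤ b) (hf : LipschitzOnWith C f (Icc a b)) :
    ∀ᵐ t, t ∈ Ioo a b → DifferentiableAt ℝ f t := by
  let K : Submodule ℝ H := (Submodule.span ℝ (f '' Icc a b)).topologicalClosure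
  have : CompleteSpace K := (Submodule.isClosed_topologicalClosure _).completeSpace_coe
  have hsep : TopologicalSpace.IsSeparable (K : Set H) := by
    have : TopologicalSpace.IsSeparable (f '' Icc a b) :=
      (isCompact_Icc.image_of_continuousOn hf.continuousOn).isSeparable
    simpa [K] using this.span (R := ℝ) |>.closure
  have : TopologicalSpace.SeparableSpace K := hsep.separableSpace
  have hmem : ∀ t, IccExtend hab ((Icc a b).domRestrict f) t ∈ K := fun t =>
    Submodule.le_topologicalClosure _ (Submodule.subset_span ⟨_, (projIcc a b hab t).2, rfl⟩)
  let F : ℝ → K := fun t => ⟨_, hmem t⟩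
  have hF : LipschitzWith C F := by
    have h := hf.to_restrict.comp (LipschitzWith.projIcc hab)
    rw [mul_one] at h
    exact h
  filter_upwards [hF.ae_differentiableAt_of_separableSpace] with t ht hmt
  have h := K.subtypeL.differentiableAt.comp t ht
  refine h.congr_of_eventuallyEq ?_
  filter_upwards [Icc_mem_nhds hmt.1 hmt.2] with s hs
  simp [F, IccExtend_of_mem hab _ hs, domRestrict]

/-- An eventually bounded family of operators into the antidual has, along an ultrafilter, a weak
operator limit with the same bound; it agrees with every strong limit that exists. -/
theorem ContinuousLinearMap.exists_ultrafilter_limit {𝕜 V α : Type*} [RCLike 𝕜]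
    [NormedAddCommGroup V] [NormedSpace 𝕜 V] (U : Ultrafilter α) {L : ℝ} (hL : 0 ≤ L)
    {A : α → V →L[𝕜] V →SL[starRingEnd 𝕜] 𝕜} (hA : ∀ᶠ h in U, ‖A h‖ ≤ L) :
    ∃ B : V →L[𝕜] V →SL[starRingEnd 𝕜] 𝕜, ‖B‖ ≤ L ∧
      ∀ u y, Tendsto (fun h => A h u) U (𝓝 y) → B u = y := by
  have hlim : ∀ u v, ∃ z : 𝕜, ‖z‖ ≤ L * ‖u‖ * ‖v‖ ∧ Tendsto (fun h => A h u v) U (𝓝 z) := by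
    intro u v
    have hc := isCompact_closedBall (0 : 𝕜) (L * ‖u‖ * ‖v‖)
    obtain ⟨z, hz, hz'⟩ := hc.ultrafilter_le_nhds (U.map fun h => A h u v) (by
      rw [le_principal_iff, Ultrafilter.coe_map, mem_map]
      filter_upwards [hA] with h hh
      rw [mem_preimage, mem_closedBall_zero_iff]
      refine ((A h).le_opNorm₂ u v).trans ?_
      gcongr)
    exact ⟨z, by simpa using hz, hz'⟩
  choose β hβ hβt using hlim
  let B₀ : V →ₗ[𝕜] V →ₛₗ[starRingEnd 𝕜] 𝕜 := LinearMap.mk₂'ₛₗ (RingHom.id 𝕜) (starRingEnd 𝕜) β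
    (fun u u' v => tendsto_nhds_unique (hβt _ _)
      (((hβt u v).add (hβt u' v)).congr fun h => by simp))
    (fun c u v => tendsto_nhds_unique (hβt _ _)
      (((hβt u v).const_smul c).congr fun h => by simp))
    (fun u v v' => tendsto_nhds_unique (hβt _ _)
      (((hβt u v).add (hβt u v')).congr fun h => by simp))
    (fun c u v => tendsto_nhds_unique (hβt _ _)
      (((hβt u v).const_smul (starRingEnd 𝕜 c)).congr fun h => by simp))
  refine ⟨B₀.mkContinuous₂ L hβ, B₀.mkContinuous₂_norm_le hL hβ, fun u y hy => ?_⟩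
  ext v
  exact tendsto_nhds_unique (hβt u v)
    (((ContinuousLinearMap.apply' 𝕜 (starRingEnd 𝕜) v).continuous.tendsto y).comp hy)

/-- A Lipschitz function from a compact interval to the antidual of a Hilbert space is
differentiable almost everywhere in the interior. -/
theorem LipschitzOnWith.ae_differentiableAt_antidual {𝕜 V : Type*} [RCLike 𝕜]
    [NormedAddCommGroup V] [InnerProductSpace 𝕜 V] [CompleteSpace V] {C : ℝ≥0}
    {f : ℝ → V →SL[starRingEnd 𝕜] 𝕜} {a b : ℝ} (hab : a ≤ b)
    (hf : LipschitzOnWith C f (Icc a b)) :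
    ∀ᵐ t, t ∈ Ioo a b → DifferentiableAt ℝ f t := by
  let _ := InnerProductSpace.rclikeToReal 𝕜 V
  have hnorm : ∀ x : V, ‖innerSLFlip 𝕜 x‖ = ‖x‖ := by
    intro x
    refine le_antisymm (ContinuousLinearMap.opNorm_le_bound _ (norm_nonneg x) fun y => ?_) ?_
    · rw [innerSLFlip_apply_apply, mul_comm]; exact norm_inner_le_norm y x
    · rcases eq_or_ne x 0 with rfl | hx
      · simp
      · have h := (innerSLFlip 𝕜 x).le_opNorm x
        rw [innerSLFlip_apply_apply, inner_self_eq_norm_sq_to_K, norm_pow, RCLike.norm_ofReal,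
          abs_norm, sq] at h
        exact le_of_mul_le_mul_right h (norm_pos_iff.2 hx)
  have hsurj : ∀ φ : V →SL[starRingEnd 𝕜] 𝕜, ∃ x : V, innerSLFlip 𝕜 x = φ := by
    intro φ
    let ψ : V →L[𝕜] 𝕜 := (starL 𝕜 : 𝕜 ≃L⋆[𝕜] 𝕜).toContinuousLinearMap.comp φ
    refine ⟨(InnerProductSpace.toDual 𝕜 V).symm ψ, ?_⟩
    ext y
    rw [innerSLFlip_apply_apply, ← inner_conj_symm, InnerProductSpace.toDual_symm_apply]
    simp [ψ]
  choose F hF using fun t => hsurj (f t)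
  have hFL : LipschitzOnWith C F (Icc a b) := LipschitzOnWith.of_dist_le_mul fun x hx y hy => by
    rw [dist_eq_norm, ← hnorm, map_sub, hF, hF, ← dist_eq_norm]
    exact hf.dist_le_mul x hx y hy
  filter_upwards [hFL.ae_differentiableAt_of_innerProductSpace hab] with t ht hmt
  have h := ((innerSLFlip 𝕜 (E := V)).restrictScalars ℝ).differentiableAt.comp t (ht hmt)
  exact h.congr_of_eventuallyEq (Eventually.of_forall fun s => (hF s).symm)

/-- If `S : [0,T] → L(V,V′)` is Lipschitz with constant `L` in operator norm,
then there is a bounded, strongly measurable `Ṡ : [0,T] → L(V,V′)` with `‖Ṡ(t)‖ ≤ L`,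
such that for every `u ∈ V` the function `t ↦ S(t)u` is differentiable a.e. on `(0,T)`
with derivative `Ṡ(t)u`. -/
theorem stmt_3 {𝕜 V : Type*} [RCLike 𝕜]
    [NormedAddCommGroup V] [InnerProductSpace 𝕜 V] [CompleteSpace V]
    (T L : ℝ) (hT : 0 < T) (hL : 0 ≤ L)
    (S : ℝ → (V →L[𝕜] (V →SL[starRingEnd 𝕜] 𝕜)))
    (hS : ∀ s ∈ Icc (0:ℝ) T, ∀ t ∈ Icc (0:ℝ) T, ‖S t - S s‖ ≤ L * |t - s|) :
    ∃ S' : ℝ → (V →L[𝕜] (V →SL[starRingEnd 𝕜] 𝕜)),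
      (∀ t ∈ Icc (0:ℝ) T, ‖S' t‖ ≤ L) ∧
      (∀ u : V, AEStronglyMeasurable (fun t => S' t u) (volume.restrict (Ioc 0 T))) ∧
      ∀ u : V, ∀ᵐ t ∂(volume.restrict (Ioo 0 T)),
        HasDerivAt (fun s => S s u) (S' t u) t := by
  have hex : ∀ t, ∃ B : V →L[𝕜] V →SL[starRingEnd 𝕜] 𝕜, ‖B‖ ≤ L ∧
      (t ∈ Ioo 0 T → ∀ u, DifferentiableAt ℝ (fun s => S s u) t →
        B u = deriv (fun s => S s u) t) := by
    intro t
    by_cases ht : t ∈ Ioo 0 T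
    · have hbd : ∀ᶠ s in 𝓝[≠] t, ‖slope S t s‖ ≤ L := by
        filter_upwards [self_mem_nhdsWithin,
          mem_nhdsWithin_of_mem_nhds (Icc_mem_nhds ht.1 ht.2)] with s hne hs
        have hpos : 0 < |s - t| := abs_pos.2 (sub_ne_zero.2 hne)
        refine ContinuousLinearMap.opNorm_le_bound _ hL fun u => ?_
        have h : slope S t s u = (s - t)⁻¹ • (S s - S t) u := rfl
        rw [h, norm_smul, norm_inv, Real.norm_eq_abs, inv_mul_le_iff₀ hpos]
        calc ‖(S s - S t) u‖ ≤ ‖S s - S t‖ * ‖u‖ := (S s - S t).le_opNorm u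
          _ ≤ L * |s - t| * ‖u‖ := by gcongr; exact hS t (Ioo_subset_Icc_self ht) s hs
          _ = |s - t| * (L * ‖u‖) := by ring
      have hle : (Ultrafilter.of (𝓝[≠] t) : Filter ℝ) ≤ 𝓝[≠] t := Ultrafilter.of_le _
      obtain ⟨B, hB, hB'⟩ := ContinuousLinearMap.exists_ultrafilter_limit _ hL (hle hbd)
      refine ⟨B, hB, fun _ u hu => hB' u _ ?_⟩
      exact (hasDerivAt_iff_tendsto_slope.1 hu.hasDerivAt).mono_left hle
    · exact ⟨0, ContinuousLinearMap.opNorm_zero.trans_le hL, fun h => absurd h ht⟩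
  choose S' hS'L hS' using hex
  have hdiff : ∀ u : V, ∀ᵐ t, t ∈ Ioo 0 T → DifferentiableAt ℝ (fun s => S s u) t := fun u => by
    refine LipschitzOnWith.ae_differentiableAt_antidual (C := ⟨L * ‖u‖, by positivity⟩) hT.le
      (LipschitzOnWith.of_dist_le_mul fun x hx y hy => ?_)
    rw [dist_eq_norm, Real.dist_eq]
    calc ‖S x u - S y u‖ ≤ ‖S x - S y‖ * ‖u‖ := (S x - S y).le_opNorm u
      _ ≤ L * |x - y| * ‖u‖ := by gcongr; exact hS y hy x hx
      _ = L * ‖u‖ * |x - y| := by ring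
  refine ⟨S', fun t _ => hS'L t, fun u => ?_, fun u => ?_⟩
  · rw [← Measure.restrict_congr_set (Ioo_ae_eq_Ioc (μ := volume))]
    refine (aestronglyMeasurable_deriv (fun s => S s u) _).congr ?_
    rw [EventuallyEq, ae_restrict_iff' measurableSet_Ioo]
    filter_upwards [hdiff u] with t ht hmt
    exact (hS' t hmt u (ht hmt)).symm
  · rw [ae_restrict_iff' measurableSet_Ioo]
    filter_upwards [hdiff u] with t ht hmt
    rw [hS' t hmt u (ht hmt)]
    exact (ht hmt).hasDerivAt
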